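/- Let H ∈ (0,1). There exists a constant C_H depending only on H such that for every integer n ≥ 1 and every l ∈ {1,…,n}, Σ_{j=1}^n Σ_{k=1}^n |β_{k,l} · β_{j,l}| ≤ C_H · n^{−min(4H, 2)}. -/

import Mathlib

/-- The fBm autocorrelation sequence `ρ_H(k) = (1/2)(|k+1|^{2H} − 2|k|^{2H} + |k−1|^{2H})`. -/
noncomputable def rhoH (H : ℝ) (k : ℤ) : ℝ :=
  (1/2) * (|(k:ℝ) + 1| ^ (2 * H) - 2 * |(k:ℝ)| ^ (2 * H) + |(k:ℝ) - 1| ^ (2 * H))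

lemma rhoH_neg (H : ℝ) (k : ℤ) : rhoH H (-k) = rhoH H k := by
  unfold rhoH
  push_cast
  have h1 : |-(k:ℝ) + 1| = |(k:ℝ) - 1| := by rw [← abs_neg]; congr 1; ring
  have h2 : |-(k:ℝ) - 1| = |(k:ℝ) + 1| := by rw [← abs_neg]; congr 1; ring
  rw [h1, h2, abs_neg]; ring

lemma rhoH_zero (H : ℝ) (h : 0 < H) : rhoH H 0 = 1 := by
  have : (2 * H) ≠ 0 := by positivity
  simp [rhoH, Real.zero_rpow this]; norm_num

lemma rhoH_succ (H : ℝ) (m : ℕ) : rhoH H ((m + 1 : ℕ) : ℤ) =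
    (1/2) * (((m:ℝ) + 2) ^ (2 * H) - 2 * ((m:ℝ) + 1) ^ (2 * H) + (m:ℝ) ^ (2 * H)) := by
  unfold rhoH
  push_cast
  have hm : (0:ℝ) ≤ m := Nat.cast_nonneg m
  have h1 : |(m:ℝ) + 1 + 1| = m + 2 := by rw [abs_of_nonneg (by positivity)]; ring
  have h2 : |(m:ℝ) + 1 - 1| = m := by rw [add_sub_cancel_right, abs_of_nonneg hm]
  rw [h1, h2, abs_of_nonneg (by positivity : (0:ℝ) ≤ (m:ℝ) + 1)]

lemma sum_convex (H : ℝ) (h0 : 0 < H) (h : 1 ≤ 2 * H) (n : ℕ) :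
    ∑ m ∈ Finset.range (n + 1), |rhoH H (m : ℤ)| =
      (1/2) * (1 + ((n:ℝ) + 1) ^ (2 * H) - (n:ℝ) ^ (2 * H)) := by
  induction n with
  | zero =>
    have : (2 * H) ≠ 0 := by positivity
    simp [rhoH_zero H h0, Real.zero_rpow this]; norm_num
  | succ n ih =>
    rw [Finset.sum_range_succ, ih, rhoH_succ]
    have hn : (0:ℝ) ≤ n := Nat.cast_nonneg n
    have hc := (convexOn_rpow h).2 (show (n:ℝ) ∈ Set.Ici (0:ℝ) from hn)
      (show (n:ℝ) + 2 ∈ Set.Ici (0:ℝ) from by simp only [Set.mem_Ici]; positivity)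
      (show (0:ℝ) ≤ 1/2 by norm_num) (show (0:ℝ) ≤ 1/2 by norm_num) (by norm_num)
    simp only [smul_eq_mul] at hc
    rw [show (1/2 * (n:ℝ) + 1/2 * ((n:ℝ) + 2)) = n + 1 by ring] at hc
    rw [abs_of_nonneg (by linarith)]
    push_cast
    rw [show (n:ℝ) + 1 + 1 = n + 2 by ring]
    ring

lemma sum_concave (H : ℝ) (h0 : 0 < H) (h : 2 * H ≤ 1) (n : ℕ) :
    ∑ m ∈ Finset.range (n + 1), |rhoH H (m : ℤ)| =
      1 + (1/2) * (1 - (((n:ℝ) + 1) ^ (2 * H) - (n:ℝ) ^ (2 * H))) := by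
  induction n with
  | zero =>
    have : (2 * H) ≠ 0 := by positivity
    simp [rhoH_zero H h0, Real.zero_rpow this]
  | succ n ih =>
    rw [Finset.sum_range_succ, ih, rhoH_succ]
    have hn : (0:ℝ) ≤ n := Nat.cast_nonneg n
    have hc := (Real.concaveOn_rpow (by positivity) h).2 (show (n:ℝ) ∈ Set.Ici (0:ℝ) from hn)
      (show (n:ℝ) + 2 ∈ Set.Ici (0:ℝ) from by simp only [Set.mem_Ici]; positivity)
      (show (0:ℝ) ≤ 1/2 by norm_num) (show (0:ℝ) ≤ 1/2 by norm_num) (by norm_num)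
    simp only [smul_eq_mul] at hc
    rw [show (1/2 * (n:ℝ) + 1/2 * ((n:ℝ) + 2)) = n + 1 by ring] at hc
    rw [abs_of_nonpos (by linarith)]
    push_cast
    rw [show (n:ℝ) + 1 + 1 = n + 2 by ring]
    ring

lemma sum_bound (H : ℝ) (hH : H ∈ Set.Ioo (0:ℝ) 1) (n : ℕ) (hn : 1 ≤ n) :
    ∑ m ∈ Finset.range n, |rhoH H (m : ℤ)| ≤ (3/2) * (n:ℝ) ^ (max 0 (2 * H - 1)) := by
  obtain ⟨h0, h1⟩ := hH
  obtain ⟨n, rfl⟩ : ∃ m, n = m + 1 := ⟨n - 1, by omega⟩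
  have hn0 : (0:ℝ) ≤ n := Nat.cast_nonneg n
  have hpos : (0:ℝ) < (n:ℝ) + 1 := by positivity
  rcases le_total (2 * H) 1 with h | h
  · rw [sum_concave H h0 h, max_eq_left (by linarith), Real.rpow_zero]
    have := Real.rpow_le_rpow hn0 (by linarith : (n:ℝ) ≤ n + 1) (by positivity : 0 ≤ 2 * H)
    linarith
  · rw [sum_convex H h0 h, max_eq_right (by linarith)]
    push_cast
    have hq : (1:ℝ) ≤ ((n:ℝ) + 1) ^ (2 * H - 1) :=
      Real.one_le_rpow (by linarith) (by linarith)
    have hle : -1 ≤ -(1 / ((n:ℝ) + 1)) := by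
      rw [neg_le_neg_iff, div_le_one hpos]; linarith
    have hb := one_add_mul_self_le_rpow_one_add hle h
    have e1 : 1 + -(1 / ((n:ℝ) + 1)) = n / (n + 1) := by field_simp; ring
    rw [e1, Real.div_rpow hn0 hpos.le, le_div_iff₀ (by positivity)] at hb
    have e2 : ((n:ℝ) + 1) ^ (2 * H) = ((n:ℝ) + 1) ^ (2 * H - 1) * (n + 1) := by
      rw [← Real.rpow_add_one hpos.ne']; congr 1; ring
    have e3 : (1 + 2 * H * -(1 / ((n:ℝ) + 1))) * ((n:ℝ) + 1) ^ (2 * H) =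
        ((n:ℝ) + 1) ^ (2 * H) - 2 * H * ((n:ℝ) + 1) ^ (2 * H - 1) := by
      rw [e2]; field_simp; ring
    rw [e3] at hb
    nlinarith

lemma sum_shift (H : ℝ) (n l : ℕ) (hl : 1 ≤ l) (hln : l ≤ n) :
    ∑ k ∈ Finset.Icc 1 n, |rhoH H ((k:ℤ) - (l:ℤ))| ≤
      2 * ∑ m ∈ Finset.range n, |rhoH H (m : ℤ)| := by
  rw [← Finset.sum_filter_add_sum_filter_not (Finset.Icc 1 n) (fun k => k ≤ l), two_mul]
  refine add_le_add ?_ ?_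
  · have : ∑ k ∈ Finset.Icc 1 n with k ≤ l, |rhoH H ((k:ℤ) - (l:ℤ))| =
        ∑ m ∈ ((Finset.Icc 1 n).filter (fun k => k ≤ l)).image (fun k => l - k),
          |rhoH H (m : ℤ)| := by
      rw [Finset.sum_image]
      · refine Finset.sum_congr rfl fun k hk => ?_
        simp only [Finset.mem_filter, Finset.mem_Icc] at hk
        rw [← rhoH_neg, Nat.cast_sub hk.2, neg_sub]
      · intro a ha b hb hab
        simp only [Finset.coe_filter, Finset.mem_Icc, Set.mem_ofPred_eq] at ha hb hab
        omega
    rw [this]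
    refine Finset.sum_le_sum_of_subset_of_nonneg ?_ fun _ _ _ => abs_nonneg _
    intro m hm
    simp only [Finset.mem_image, Finset.mem_filter, Finset.mem_Icc, Finset.mem_range] at hm ⊢
    omega
  · have : ∑ k ∈ Finset.Icc 1 n with ¬ k ≤ l, |rhoH H ((k:ℤ) - (l:ℤ))| =
        ∑ m ∈ ((Finset.Icc 1 n).filter (fun k => ¬ k ≤ l)).image (fun k => k - l),
          |rhoH H (m : ℤ)| := by
      rw [Finset.sum_image]
      · refine Finset.sum_congr rfl fun k hk => ?_
        simp only [Finset.mem_filter, Finset.mem_Icc] at hk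
        rw [Nat.cast_sub (by omega)]
      · intro a ha b hb hab
        simp only [Finset.coe_filter, Finset.mem_Icc, Set.mem_ofPred_eq] at ha hb hab
        omega
    rw [this]
    refine Finset.sum_le_sum_of_subset_of_nonneg ?_ fun _ _ _ => abs_nonneg _
    intro m hm
    simp only [Finset.mem_image, Finset.mem_filter, Finset.mem_Icc, Finset.mem_range] at hm ⊢
    omega

/-- Lemma 8 (e): for `H ∈ (0,1)` there is a constant `C_H` such that for all `n ≥ 1` and
`l ∈ {1,…,n}`, `Σ_{j,k=1}^n |β_{k,l}·β_{j,l}| ≤ C_H · n^{−min(4H,2)}`,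
where `β_{j,k} = n^{−2H} ρ_H(j−k)`. -/
theorem stmt11 (H : ℝ) (hH : H ∈ Set.Ioo (0:ℝ) 1) :
    ∃ C : ℝ, 0 < C ∧ ∀ n : ℕ, 1 ≤ n → ∀ l : ℕ, 1 ≤ l → l ≤ n →
      (∑ j ∈ Finset.Icc 1 n, ∑ k ∈ Finset.Icc 1 n,
          |((n:ℝ) ^ (-(2 * H)) * rhoH H ((k:ℤ) - (l:ℤ)))
            * ((n:ℝ) ^ (-(2 * H)) * rhoH H ((j:ℤ) - (l:ℤ)))|)
        ≤ C * (n:ℝ) ^ (-(min (4 * H) 2)) := by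
  refine ⟨9, by norm_num, fun n hn l hl hln => ?_⟩
  have hnpos : (0:ℝ) < n := by exact_mod_cast hn
  set S := ∑ k ∈ Finset.Icc 1 n, |rhoH H ((k:ℤ) - (l:ℤ))| with hS
  have hS0 : 0 ≤ S := Finset.sum_nonneg fun _ _ => abs_nonneg _
  have hSb : S ≤ 3 * (n:ℝ) ^ (max 0 (2 * H - 1)) := by
    have h1 := sum_shift H n l hl hln
    have h2 := sum_bound H hH n hn
    linarith
  have hp : (0:ℝ) < (n:ℝ) ^ (-(2 * H)) := by positivity
  have e : (∑ j ∈ Finset.Icc 1 n, ∑ k ∈ Finset.Icc 1 n,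
          |((n:ℝ) ^ (-(2 * H)) * rhoH H ((k:ℤ) - (l:ℤ)))
            * ((n:ℝ) ^ (-(2 * H)) * rhoH H ((j:ℤ) - (l:ℤ)))|)
      = ((n:ℝ) ^ (-(2 * H)) * S) ^ 2 := by
    rw [sq, hS, Finset.mul_sum, Finset.sum_mul_sum]
    refine Finset.sum_congr rfl fun j _ => Finset.sum_congr rfl fun k _ => ?_
    rw [abs_mul, abs_mul, abs_mul, abs_of_pos hp]; ring
  rw [e]
  have e2 : (n:ℝ) ^ (-(min (4 * H) 2)) =
      ((n:ℝ) ^ (-(2 * H)) * (n:ℝ) ^ (max 0 (2 * H - 1))) ^ 2 := by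
    rw [← Real.rpow_add hnpos, ← Real.rpow_natCast, ← Real.rpow_mul hnpos.le]
    congr 1
    push_cast
    rcases le_total (2 * H) 1 with h | h
    · rw [max_eq_left (by linarith), min_eq_left (by linarith)]; ring
    · rw [max_eq_right (by linarith), min_eq_right (by linarith)]; ring
  rw [e2]
  calc ((n:ℝ) ^ (-(2 * H)) * S) ^ 2
      ≤ ((n:ℝ) ^ (-(2 * H)) * (3 * (n:ℝ) ^ (max 0 (2 * H - 1)))) ^ 2 := by gcongr
    _ = _ := by ring
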